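/- Reparametrisation lemma: Let γ : E × S¹ → F be a smooth family of loops and g : E → F a smooth function such that γ_x surrounds g(x) for every x. Then there exists a smooth family of circle diffeomorphisms φ_x : S¹ → S¹ with φ_x(0) = 0 such that the average of γ_x ∘ φ_x equals g(x) for all x. -/

import Mathlib

open scoped ContDiff

/-- `f` surrounds `v`: there is an affine basis of `F` contained in the image of `f`
with respect to which `v` has strictly positive barycentric coordinates. -/
def LoopSurrounds {F : Type*} [NormedAddCommGroup F] [NormedSpace ℝ F]
    (f : ℝ → F) (v : F) : Prop :=
  ∃ (p : Fin (Module.finrank ℝ F + 1) → F) (w : Fin (Module.finrank ℝ F + 1) → ℝ),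
    (∀ i, p i ∈ Set.range f) ∧ AffineIndependent ℝ p ∧
      affineSpan ℝ (Set.range p) = ⊤ ∧ (∀ i, 0 < w i) ∧
      ∑ i, w i = 1 ∧ ∑ i, w i • p i = v


open Set Filter Topology

theorem hasFDerivAt_param {X G : Type*} [NormedAddCommGroup X] [NormedSpace ℝ X]
    [FiniteDimensional ℝ X] [NormedAddCommGroup G] [NormedSpace ℝ G] [CompleteSpace G]
    {f : X × ℝ → G} (hf : ContDiff ℝ 1 f) (x : X) :
    HasFDerivAt (fun x => ∫ t in (0:ℝ)..1, f (x, t))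
      (∫ t in (0:ℝ)..1, (fderiv ℝ f (x, t)).comp (ContinuousLinearMap.inl ℝ X ℝ)) x := by
  have hc : Continuous f := hf.continuous
  have hd : Continuous fun p : X × ℝ =>
      (fderiv ℝ f p).comp (ContinuousLinearMap.inl ℝ X ℝ) :=
    (hf.continuous_fderiv one_ne_zero).clm_comp continuous_const
  have hK : IsCompact (Metric.closedBall x 1 ×ˢ Icc (0:ℝ) 1) :=
    (isCompact_closedBall x 1).prod isCompact_Icc
  obtain ⟨C, hC⟩ := hK.exists_bound_of_continuousOn hd.continuousOn
  refine intervalIntegral.hasFDerivAt_integral_of_dominated_of_fderiv_le (𝕜 := ℝ)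
    (s := Metric.closedBall x 1) (bound := fun _ => C)
    (F := fun x t => f (x, t))
    (F' := fun x t => (fderiv ℝ f (x, t)).comp (ContinuousLinearMap.inl ℝ X ℝ))
    (Metric.closedBall_mem_nhds x one_pos) ?_ ?_ ?_ ?_ ?_ ?_
  · exact Eventually.of_forall fun y =>
      (by fun_prop : Continuous fun t => f (y, t)).aestronglyMeasurable
  · exact (by fun_prop : Continuous fun t => f (x, t)).intervalIntegrable _ _
  · exact (hd.comp (by fun_prop : Continuous fun t : ℝ => (x, t))).aestronglyMeasurable
  · refine Eventually.of_forall fun t ht y hy => hC (y, t) ⟨hy, ?_⟩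
    rw [uIoc_of_le zero_le_one] at ht
    exact Ioc_subset_Icc_self ht
  · exact intervalIntegrable_const
  · refine Eventually.of_forall fun t ht y hy => ?_
    have h1 : HasFDerivAt f (fderiv ℝ f (y, t)) (y, t) :=
      (hf.differentiable one_ne_zero _).hasFDerivAt
    exact h1.comp y (hasFDerivAt_prodMk_left y t)

theorem fderiv_param_apply {X G : Type*} [NormedAddCommGroup X] [NormedSpace ℝ X]
    [FiniteDimensional ℝ X] [NormedAddCommGroup G] [NormedSpace ℝ G] [CompleteSpace G]
    {f : X × ℝ → G} (hf : ContDiff ℝ 1 f) (x v : X) :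
    fderiv ℝ (fun x => ∫ t in (0:ℝ)..1, f (x, t)) x v
      = ∫ t in (0:ℝ)..1, fderiv ℝ f (x, t) (v, 0) := by
  have hd : Continuous fun p : X × ℝ =>
      (fderiv ℝ f p).comp (ContinuousLinearMap.inl ℝ X ℝ) :=
    (hf.continuous_fderiv one_ne_zero).clm_comp continuous_const
  rw [(hasFDerivAt_param hf x).fderiv, ContinuousLinearMap.intervalIntegral_apply]
  · rfl
  · exact (hd.comp (by fun_prop : Continuous fun t : ℝ => (x, t))).intervalIntegrable _ _

theorem contDiff_param_nat {X G : Type*} [NormedAddCommGroup X] [NormedSpace ℝ X]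
    [FiniteDimensional ℝ X] [NormedAddCommGroup G] [NormedSpace ℝ G] [CompleteSpace G]
    (n : ℕ) : ∀ f : X × ℝ → G, ContDiff ℝ ∞ f →
      ContDiff ℝ n (fun x => ∫ t in (0:ℝ)..1, f (x, t)) := by
  induction n with
  | zero =>
    intro f hf
    have hc := hf.continuous
    refine contDiff_zero.2 ?_
    exact intervalIntegral.continuous_parametric_intervalIntegral_of_continuous'
      (f := fun x t => f (x, t)) hc 0 1
  | succ n ih =>
    intro f hf
    have hf1 : ContDiff ℝ 1 f := hf.of_le (by exact_mod_cast le_top)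
    push_cast
    rw [contDiff_succ_iff_fderiv_apply]
    refine ⟨fun x => (hasFDerivAt_param hf1 x).differentiableAt, by simp, fun v => ?_⟩
    simp_rw [fderiv_param_apply hf1]
    exact ih (fun p => fderiv ℝ f p (v, 0))
      ((hf.fderiv_right (m := ∞) (by simp)).clm_apply contDiff_const)

theorem contDiff_param {X G : Type*} [NormedAddCommGroup X] [NormedSpace ℝ X]
    [FiniteDimensional ℝ X] [NormedAddCommGroup G] [NormedSpace ℝ G] [CompleteSpace G]
    {f : X × ℝ → G} (hf : ContDiff ℝ ∞ f) :
      ContDiff ℝ ∞ (fun x => ∫ t in (0:ℝ)..1, f (x, t)) :=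
  contDiff_infty.2 fun n => contDiff_param_nat n f hf

/-- Smoothness of implicitly defined functions. -/
theorem contDiff_implicit {X Y Z : Type*} [NormedAddCommGroup X] [NormedSpace ℝ X]
    [FiniteDimensional ℝ X] [NormedAddCommGroup Y] [NormedSpace ℝ Y]
    [FiniteDimensional ℝ Y] [NormedAddCommGroup Z] [NormedSpace ℝ Z]
    [FiniteDimensional ℝ Z] (hYZ : Module.finrank ℝ Y = Module.finrank ℝ Z)
    {f : X × Y → Z} (hf : ContDiff ℝ ∞ f) {y : X → Y} (hy : ∀ x, f (x, y x) = 0)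
    (huniq : ∀ x y', f (x, y') = 0 → y' = y x)
    (hinj : ∀ x v, fderiv ℝ f (x, y x) (0, v) = 0 → v = 0) : ContDiff ℝ ∞ y := by
  have : CompleteSpace X := FiniteDimensional.complete ℝ X
  have : CompleteSpace Y := FiniteDimensional.complete ℝ Y
  have : CompleteSpace Z := FiniteDimensional.complete ℝ Z
  rw [contDiff_iff_contDiffAt]
  intro x
  set Φ : X × Y → X × Z := fun p => (p.1, f p) with hΦdef
  have hΦ : ContDiff ℝ ∞ Φ := contDiff_fst.prodMk hf
  set L : X × Y →L[ℝ] X × Z := (ContinuousLinearMap.fst ℝ X Y).prod (fderiv ℝ f (x, y x))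
    with hL
  have hΦ' : HasFDerivAt Φ L (x, y x) :=
    hasFDerivAt_fst.prodMk (hf.differentiable (by simp) _).hasFDerivAt
  have hLinj : Function.Injective (L : X × Y →ₗ[ℝ] X × Z) := by
    rw [← LinearMap.ker_eq_bot, LinearMap.ker_eq_bot']
    rintro ⟨u, v⟩ h
    have h1 : u = 0 := congrArg Prod.fst h
    have h2 : fderiv ℝ f (x, y x) (u, v) = 0 := congrArg Prod.snd h
    subst h1
    rw [hinj x v h2]; rfl
  have hdim : Module.finrank ℝ (X × Y) = Module.finrank ℝ (X × Z) := by
    simp [hYZ]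
  let e : (X × Y) ≃L[ℝ] (X × Z) :=
    (LinearEquiv.ofInjectiveOfFinrankEq (L : X × Y →ₗ[ℝ] X × Z) hLinj hdim).toContinuousLinearEquiv
  have hΦe : HasFDerivAt Φ (e : X × Y →L[ℝ] X × Z) (x, y x) := by
    convert! hΦ' using 1
  have hat : ContDiffAt ℝ ∞ Φ (x, y x) := hΦ.contDiffAt
  have hloc := hat.to_localInverse hΦe (by simp)
  have hΦx : Φ (x, y x) = (x, 0) := by simp [hΦdef, hy]
  have hri : ∀ᶠ z in 𝓝 (Φ (x, y x)), Φ (hat.localInverse hΦe (by simp) z) = z :=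
    HasStrictFDerivAt.eventually_right_inverse _
  rw [hΦx] at hloc hri
  have hcomp : ContDiffAt ℝ ∞
      (fun x' : X => (hat.localInverse hΦe (by simp) (x', (0:Z))).2) x :=
    contDiffAt_snd.comp x (hloc.comp x (contDiffAt_id.prodMk contDiffAt_const))
  refine hcomp.congr_of_eventuallyEq ?_
  have ht : Tendsto (fun x' : X => (x', (0:Z))) (𝓝 x) (𝓝 (x, 0)) :=
    (by fun_prop : Continuous fun x' : X => (x', (0:Z))).tendsto x
  filter_upwards [ht.eventually hri] with x' hx'
  symm
  apply huniq
  have h1 := congrArg Prod.fst hx'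
  have h2 := congrArg Prod.snd hx'
  simp only [hΦdef] at h1 h2
  rw [← h1] 
  rw [h1]
  convert h2 using 2
  exact Prod.ext h1.symm rfl

/-- A loop surrounding `v` goes to the positive side of each hyperplane through `v`. -/
theorem LoopSurrounds.exists_pos {F : Type*} [NormedAddCommGroup F] [NormedSpace ℝ F]
    {f : ℝ → F} {v : F} (h : LoopSurrounds f v) (hper : Function.Periodic f 1)
    (l : F →L[ℝ] ℝ) (hl : l ≠ 0) : ∃ t ∈ Icc (0:ℝ) 1, 0 < l (f t - v) := by
  obtain ⟨p, w, hp, -, hspan, hw, hw1, hwv⟩ := h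
  by_contra! hcon
  have hle : ∀ t, l (f t - v) ≤ 0 := by
    intro t
    obtain ⟨s, hs, hst⟩ := hper.exists_mem_Ico₀ one_pos t
    rw [hst]
    exact hcon s ⟨hs.1, hs.2.le⟩
  have hlp : ∀ i, l (p i - v) ≤ 0 := by
    intro i
    obtain ⟨t, ht⟩ := hp i
    rw [← ht]; exact hle t
  have hsum : ∑ i, w i * l (p i - v) = 0 := by
    have : ∑ i, w i * l (p i - v) = l (∑ i, w i • p i) - (∑ i, w i) * l v := by
      simp [map_sum, mul_sub, Finset.sum_sub_distrib, Finset.sum_mul]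
    rw [this, hw1, hwv]; simp
  have hz : ∀ i, l (p i) = l v := by
    intro i
    have := (Finset.sum_eq_zero_iff_of_nonpos
      (fun i _ => mul_nonpos_of_nonneg_of_nonpos (hw i).le (hlp i))).1 hsum i (Finset.mem_univ i)
    rcases mul_eq_zero.1 this with h | h
    · exact absurd h (hw i).ne'
    · rw [map_sub] at h; linarith
  apply hl
  have hall : ∀ u : F, l u = l v := by
    intro u
    have hu : u ∈ affineSpan ℝ (Set.range p) := by rw [hspan]; trivial
    have hsub : affineSpan ℝ (Set.range p) ≤
        (AffineSubspace.mk' v (LinearMap.ker (l : F →ₗ[ℝ] ℝ))) := by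
      rw [affineSpan_le]
      rintro _ ⟨i, rfl⟩
      simp [AffineSubspace.mem_mk', hz i]
    have := hsub hu
    simpa [AffineSubspace.mem_mk', sub_eq_zero] using this
  ext u
  rw [hall u, ← hall 0]; simp

section crit
variable {F : Type*} [NormedAddCommGroup F] [NormedSpace ℝ F] [FiniteDimensional ℝ F]

theorem exists_crit {h : ℝ → F} (hc : Continuous h)
    (hpos : ∀ l : F →L[ℝ] ℝ, l ≠ 0 → ∃ t ∈ Icc (0:ℝ) 1, 0 < l (h t)) :
    ∃ l : F →L[ℝ] ℝ, ∫ t in (0:ℝ)..1, Real.exp (l (h t)) • h t = 0 := by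
  have : CompleteSpace F := FiniteDimensional.complete ℝ F
  set N : (F →L[ℝ] ℝ) → ℝ := fun l => ∫ t in (0:ℝ)..1, max (l (h t)) 0 with hN
  set H : (F →L[ℝ] ℝ) → ℝ := fun l => ∫ t in (0:ℝ)..1, Real.exp (l (h t)) with hH
  have hNc : Continuous N := by
    apply intervalIntegral.continuous_parametric_intervalIntegral_of_continuous'
    simp only [Function.uncurry_def]
    fun_prop
  have hHc : Continuous H := by
    apply intervalIntegral.continuous_parametric_intervalIntegral_of_continuous'
    simp only [Function.uncurry_def]
    fun_prop
  have hNpos : ∀ l, l ≠ 0 → 0 < N l := by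
    intro l hl
    obtain ⟨t, ht, htp⟩ := hpos l hl
    exact intervalIntegral.integral_pos zero_lt_one (by fun_prop)
      (fun _ _ => le_max_right _ _) ⟨t, ht, lt_max_of_lt_left htp⟩
  have hNhom : ∀ (c : ℝ) (l), 0 ≤ c → N (c • l) = c * N l := by
    intro c l hc0
    simp only [hN, ← intervalIntegral.integral_const_mul]
    congr 1; ext t
    simp [mul_max_of_nonneg _ _ hc0]
  have hNH : ∀ l, N l ≤ H l := by
    intro l
    apply intervalIntegral.integral_mono_on zero_le_one
    · exact (by fun_prop : Continuous fun t => max (l (h t)) 0).intervalIntegrable _ _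
    · exact (by fun_prop : Continuous fun t => Real.exp (l (h t))).intervalIntegrable _ _
    · intro t _
      exact max_le (by linarith [Real.add_one_le_exp (l (h t))]) (Real.exp_pos _).le
  have hlow : ∃ c > 0, ∀ l, c * ‖l‖ ≤ H l := by
    have hS : IsCompact (Metric.sphere (0 : F →L[ℝ] ℝ) 1) := isCompact_sphere _ _
    have : ∃ c > 0, ∀ l ∈ Metric.sphere (0 : F →L[ℝ] ℝ) 1, c ≤ N l := by
      rcases (Metric.sphere (0 : F →L[ℝ] ℝ) 1).eq_empty_or_nonempty with he | hne
      · exact ⟨1, one_pos, by simp [he]⟩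
      · obtain ⟨l0, hl0, hmin⟩ := hS.exists_isMinOn hne hNc.continuousOn
        refine ⟨N l0, hNpos l0 ?_, fun l hl => hmin hl⟩
        rintro rfl
        simp at hl0
    obtain ⟨c, hc0, hcN⟩ := this
    refine ⟨c, hc0, fun l => ?_⟩
    by_cases hl : l = 0
    · subst hl
      simp [hH]
    · have hn : ‖l‖ ≠ 0 := norm_ne_zero_iff.2 hl
      have h1 := hcN (‖l‖⁻¹ • l) (by simp [norm_smul, hn])
      have h2 := hNhom ‖l‖ (‖l‖⁻¹ • l) (norm_nonneg l)
      rw [smul_inv_smul₀ hn] at h2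
      have := hNH l
      nlinarith [norm_nonneg l]
  obtain ⟨c, hc0, hcH⟩ := hlow
  have htend : Tendsto H (cocompact _) atTop :=
    tendsto_atTop_mono hcH (tendsto_norm_cocompact_atTop.const_mul_atTop hc0)
  obtain ⟨l, hl⟩ := hHc.exists_forall_le htend
  refine ⟨l, ?_⟩
  have hcont : Continuous fun t => Real.exp (l (h t)) • h t := by fun_prop
  -- it suffices to test against linear forms
  have key : ∀ m : F →L[ℝ] ℝ, m (∫ t in (0:ℝ)..1, Real.exp (l (h t)) • h t) = 0 := by
    intro m
    rw [← m.intervalIntegral_comp_comm (hcont.intervalIntegrable _ _)]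
    have hbd : ∃ C, ∀ p ∈ Metric.closedBall (0:ℝ) 1 ×ˢ Icc (0:ℝ) 1,
        ‖Real.exp (l (h p.2) + p.1 * m (h p.2)) * m (h p.2)‖ ≤ C :=
      ((isCompact_closedBall (0:ℝ) 1).prod isCompact_Icc).exists_bound_of_continuousOn
        (by fun_prop)
    obtain ⟨C, hC⟩ := hbd
    have hder := (intervalIntegral.hasDerivAt_integral_of_dominated_loc_of_deriv_le (𝕜 := ℝ)
      (μ := MeasureTheory.volume) (a := 0) (b := 1)
      (F := fun (s t : ℝ) => Real.exp (l (h t) + s * m (h t)))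
      (F' := fun s t => Real.exp (l (h t) + s * m (h t)) * m (h t)) (x₀ := 0)
      (bound := fun _ => C)
      (Metric.closedBall_mem_nhds (0:ℝ) one_pos)
      (Eventually.of_forall fun s => (by fun_prop : Continuous fun t =>
        Real.exp (l (h t) + s * m (h t))).aestronglyMeasurable)
      ((by fun_prop : Continuous fun t =>
        Real.exp (l (h t) + 0 * m (h t))).intervalIntegrable _ _)
      ((by fun_prop : Continuous fun t =>
        Real.exp (l (h t) + 0 * m (h t)) * m (h t)).aestronglyMeasurable)
      (Eventually.of_forall fun t ht s hs => hC (s, t) ⟨hs, by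
        rw [uIoc_of_le zero_le_one] at ht
        exact Ioc_subset_Icc_self ht⟩)
      intervalIntegrable_const
      (Eventually.of_forall fun t ht s hs => by
        have h1 : HasDerivAt (fun s : ℝ => l (h t) + s * m (h t)) (m (h t)) s := by
          simpa using ((hasDerivAt_id s).mul_const (m (h t))).const_add (l (h t))
        exact h1.exp)).2
    have hmin : IsLocalMin (fun s : ℝ => ∫ t in (0:ℝ)..1,
        Real.exp (l (h t) + s * m (h t))) 0 := by
      refine Eventually.of_forall fun s => ?_
      simpa [hH] using hl (l + s • m)
    have := hmin.hasDerivAt_eq_zero hder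
    simpa using this
  by_contra hne
  obtain ⟨m, -, hm⟩ := exists_dual_vector ℝ _ (norm_ne_zero_iff.2 hne)
  rw [key m] at hm
  simp at hm
  exact hne (norm_eq_zero.1 hm.symm)

theorem crit_unique {h : ℝ → F} (hc : Continuous h)
    (hpos : ∀ l : F →L[ℝ] ℝ, l ≠ 0 → ∃ t ∈ Icc (0:ℝ) 1, 0 < l (h t))
    {l l' : F →L[ℝ] ℝ} (hl : ∫ t in (0:ℝ)..1, Real.exp (l (h t)) • h t = 0)
    (hl' : ∫ t in (0:ℝ)..1, Real.exp (l' (h t)) • h t = 0) : l = l' := by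
  have : CompleteSpace F := FiniteDimensional.complete ℝ F
  by_contra hne
  obtain ⟨t, ht, htp⟩ := hpos (l - l') (sub_ne_zero.2 hne)
  have h1 : ∫ t in (0:ℝ)..1, (Real.exp (l (h t)) - Real.exp (l' (h t))) * (l - l') (h t) = 0 := by
    have i1 : IntervalIntegrable (fun t => Real.exp (l (h t)) • h t) MeasureTheory.volume 0 1 :=
      (by fun_prop : Continuous fun t => Real.exp (l (h t)) • h t).intervalIntegrable _ _
    have i2 : IntervalIntegrable (fun t => Real.exp (l' (h t)) • h t) MeasureTheory.volume 0 1 :=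
      (by fun_prop : Continuous fun t => Real.exp (l' (h t)) • h t).intervalIntegrable _ _
    have := (l - l').intervalIntegral_comp_comm (i1.sub i2)
    rw [intervalIntegral.integral_sub i1 i2, hl, hl', sub_zero, map_zero] at this
    rw [← this]
    congr 1; ext t
    simp only [map_sub, map_smul, smul_eq_mul]
    ring
  have h2 : ∀ a b : ℝ, 0 ≤ (Real.exp a - Real.exp b) * (a - b) := by
    intro a b
    rcases le_total a b with hab | hab
    · exact mul_nonneg_of_nonpos_of_nonpos (by linarith [Real.exp_le_exp.2 hab]) (by linarith)
    · exact mul_nonneg (by linarith [Real.exp_le_exp.2 hab]) (by linarith)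
  have := intervalIntegral.integral_pos (f := fun t =>
    (Real.exp (l (h t)) - Real.exp (l' (h t))) * (l - l') (h t)) zero_lt_one (by fun_prop)
    (fun t _ => h2 _ _) ⟨t, ht, by
      refine mul_pos ?_ htp
      have : l' (h t) < l (h t) := by simpa using htp
      linarith [Real.exp_lt_exp.2 this]⟩
  exact this.ne' h1

theorem crit_nondegenerate {h : ℝ → F} (hc : Continuous h)
    (hpos : ∀ l : F →L[ℝ] ℝ, l ≠ 0 → ∃ t ∈ Icc (0:ℝ) 1, 0 < l (h t))
    {l m : F →L[ℝ] ℝ}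
    (hm : ∫ t in (0:ℝ)..1, (Real.exp (l (h t)) * m (h t)) • h t = 0) : m = 0 := by
  have : CompleteSpace F := FiniteDimensional.complete ℝ F
  by_contra hne
  obtain ⟨t, ht, htp⟩ := hpos m hne
  have h1 : ∫ t in (0:ℝ)..1, Real.exp (l (h t)) * m (h t) * m (h t) = 0 := by
    have := m.intervalIntegral_comp_comm
      ((by fun_prop : Continuous fun t =>
        (Real.exp (l (h t)) * m (h t)) • h t).intervalIntegrable
          (μ := MeasureTheory.volume) 0 1)
    rw [hm, map_zero] at this
    simpa using this
  have := intervalIntegral.integral_pos (f := fun t =>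
    Real.exp (l (h t)) * m (h t) * m (h t)) zero_lt_one (by fun_prop)
    (fun t _ => by
      rw [mul_assoc]; exact mul_nonneg (Real.exp_pos _).le (mul_self_nonneg _))
    ⟨t, ht, by positivity⟩
  exact this.ne' h1

end crit

/-- From a smooth family of positive densities to a smooth family of diffeomorphisms. -/
theorem exists_diffeo_of_density {E F : Type*}
    [NormedAddCommGroup E] [NormedSpace ℝ E] [FiniteDimensional ℝ E]
    [NormedAddCommGroup F] [NormedSpace ℝ F] [FiniteDimensional ℝ F]
    {γ : E → ℝ → F} (hγ : Continuous ↿γ) {ρ : E × ℝ → ℝ} (hρ : ContDiff ℝ ∞ ρ)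
    (hpos : ∀ p, 0 < ρ p) (hper : ∀ x t, ρ (x, t + 1) = ρ (x, t))
    (hone : ∀ x, ∫ t in (0:ℝ)..1, ρ (x, t) = 1) :
    ∃ φ : E → ℝ → ℝ,
      ContDiff ℝ ∞ ↿φ ∧
      (∀ x, φ x 0 = 0) ∧
      (∀ x s, φ x (s + 1) = φ x s + 1) ∧
      (∀ x s, 0 < deriv (φ x) s) ∧
      ∀ x, (∫ s in (0 : ℝ)..1, γ x (φ x s)) = ∫ t in (0:ℝ)..1, ρ (x, t) • γ x t := by
  have : CompleteSpace F := FiniteDimensional.complete ℝ F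
  have hρc : Continuous ρ := hρ.continuous
  have hρx : ∀ x, Continuous fun t => ρ (x, t) := fun x => by fun_prop
  have hint : ∀ x a b, IntervalIntegrable (fun t => ρ (x, t)) MeasureTheory.volume a b :=
    fun x a b => (hρx x).intervalIntegrable a b
  set ψ : E → ℝ → ℝ := fun x t => ∫ s in (0:ℝ)..t, ρ (x, s) with hψ
  have hψd : ∀ x t, HasDerivAt (ψ x) (ρ (x, t)) t := fun x t =>
    intervalIntegral.integral_hasDerivAt_right (hint x 0 t)
      ((hρx x).stronglyMeasurableAtFilter _ _) (hρx x).continuousAt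
  have hψ0 : ∀ x, ψ x 0 = 0 := fun x => by simp [hψ]
  have hψ1 : ∀ x t, ψ x (t + 1) = ψ x t + 1 := by
    intro x t
    have hp : Function.Periodic (fun t => ρ (x, t)) 1 := hper x
    have h1 := hp.intervalIntegral_add_eq t 0
    rw [zero_add, hone x] at h1
    simp only [hψ]
    rw [← intervalIntegral.integral_add_adjacent_intervals (hint x 0 t) (hint x t (t + 1)), h1]
  have hψmono : ∀ x, StrictMono (ψ x) := fun x =>
    strictMono_of_hasDerivAt_pos (hψd x) fun t => hpos _
  have hψc : ∀ x, Continuous (ψ x) := fun x =>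
    continuous_iff_continuousAt.2 fun t => (hψd x t).continuousAt
  have hψn : ∀ x (n : ℕ), ψ x n = n := by
    intro x n
    induction n with
    | zero => simpa using hψ0 x
    | succ n ih => push_cast; rw [hψ1, ih]
  have hψm : ∀ x (n : ℕ), ψ x (-n) = -n := by
    intro x n
    induction n with
    | zero => simpa using hψ0 x
    | succ n ih =>
      have := hψ1 x (-(n + 1 : ℕ))
      push_cast at this ⊢
      rw [show -((n:ℝ) + 1) + 1 = -n by ring, ih] at this
      linarith
  have hψsurj : ∀ x s, ∃ t, ψ x t = s := by
    intro x s
    obtain ⟨n, hn⟩ := exists_nat_ge |s|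
    have h1 := abs_le.1 hn
    have : s ∈ range (ψ x) := mem_range_of_exists_le_of_exists_ge (hψc x)
      ⟨-(n:ℝ), by rw [hψm]; exact h1.1⟩ ⟨(n:ℝ), by rw [hψn]; exact h1.2⟩
    exact this
  choose φ hφ using hψsurj
  have hφu : ∀ x t s, ψ x t = s → t = φ x s := fun x t s h =>
    (hψmono x).injective (by rw [h, hφ])
  have hψsm : ContDiff ℝ ∞ (fun p : E × ℝ => ψ p.1 p.2) := by
    have h1 : (fun p : E × ℝ => ψ p.1 p.2)
        = fun p : E × ℝ => p.2 * ∫ u in (0:ℝ)..1, ρ (p.1, p.2 * u) := by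
      ext p
      have := intervalIntegral.smul_integral_comp_mul_left (a := 0) (b := 1)
        (fun t => ρ (p.1, t)) p.2
      simpa [hψ] using this.symm
    rw [h1]
    refine contDiff_snd.mul (contDiff_param (f := fun q : (E × ℝ) × ℝ =>
      ρ (q.1.1, q.1.2 * q.2)) ?_)
    fun_prop
  have hφsm : ContDiff ℝ ∞ (fun p : E × ℝ => φ p.1 p.2) := by
    have hf : ContDiff ℝ ∞ (fun q : (E × ℝ) × ℝ => ψ q.1.1 q.2 - q.1.2) := by
      refine ContDiff.sub (hψsm.comp (g := fun p : E × ℝ => ψ p.1 p.2)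
        (f := fun q : (E × ℝ) × ℝ => (q.1.1, q.2)) (by fun_prop)) (by fun_prop)
    refine contDiff_implicit (X := E × ℝ) (Y := ℝ) (Z := ℝ) rfl hf ?_ ?_ ?_
    · rintro ⟨x, s⟩; simp [hφ]
    · rintro ⟨x, s⟩ t ht
      exact hφu x t s (sub_eq_zero.1 ht)
    · rintro ⟨x, s⟩ v hv
      have h1 := (hf.differentiable (by simp) ((x, s), φ x s)).hasFDerivAt
      have h2 := h1.comp_hasDerivAt_of_eq (φ x s)
        ((hasDerivAt_const (φ x s) (x, s)).prodMk (hasDerivAt_id (φ x s))) rfl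
      have h3 : HasDerivAt (fun t => ψ x t - s) (ρ (x, φ x s)) (φ x s) :=
        (hψd x _).sub_const s
      have h4 := h2.unique h3
      have h5 : (((0 : E × ℝ), v) : (E × ℝ) × ℝ) = v • ((0 : E × ℝ), (1:ℝ)) := by simp
      rw [h5, map_smul] at hv
      rcases smul_eq_zero.1 hv with h | h
      · exact h
      · exact absurd (h4.symm.trans h) (hpos _).ne'
  have hφd : ∀ x s, DifferentiableAt ℝ (φ x) s := by
    intro x s
    have : Differentiable ℝ (fun s => φ x s) :=
      (hφsm.comp (contDiff_prodMk_right x)).differentiable (by simp)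
    exact this s
  have hmul : ∀ x s, ρ (x, φ x s) * deriv (φ x) s = 1 := by
    intro x s
    have h1 := (hψd x (φ x s)).comp s (hφd x s).hasDerivAt
    have h2 : ψ x ∘ φ x = id := funext fun s => hφ x s
    rw [h2] at h1
    exact h1.unique (hasDerivAt_id s)
  have hφ0 : ∀ x, φ x 0 = 0 := fun x => (hφu x 0 0 (hψ0 x)).symm
  have hφ1 : ∀ x s, φ x (s + 1) = φ x s + 1 := fun x s =>
    (hφu x _ _ (by rw [hψ1, hφ])).symm
  refine ⟨φ, hφsm, hφ0, hφ1, ?_, ?_⟩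
  · intro x s
    exact pos_of_mul_pos_right (by rw [hmul]; exact one_pos) (hpos (x, φ x s)).le
  · intro x
    have hγx : Continuous (γ x) := hγ.comp (by fun_prop : Continuous fun t : ℝ => (x, t))
    have hdc : Continuous (deriv (φ x)) :=
      ((hφsm.comp (contDiff_prodMk_right x) : ContDiff ℝ ∞ (φ x))).continuous_deriv (by simp)
    have hsub := intervalIntegral.integral_deriv_smul_comp (a := 0) (b := 1)
      (f := φ x) (f' := deriv (φ x)) (g := fun t => ρ (x, t) • γ x t)
      (fun s _ => (hφd x s).hasDerivAt) hdc.continuousOn ((hρx x).smul hγx)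
    have h01 : φ x 1 = 1 := by simpa [hφ0] using hφ1 x 0
    rw [hφ0, h01] at hsub
    rw [← hsub]
    congr 1; ext s
    simp only [Function.comp]
    rw [smul_smul, mul_comm, hmul, one_smul]

/-- Reparametrisation lemma: given a smooth family of loops `γ` such that `γ x`
surrounds `g x` for all `x`, there is a smooth family of circle diffeomorphisms
`φ x` fixing `0` such that `γ x ∘ φ x` has average `g x`. -/
theorem exists_reparametrisation {E F : Type*}
    [NormedAddCommGroup E] [NormedSpace ℝ E] [FiniteDimensional ℝ E]
    [NormedAddCommGroup F] [NormedSpace ℝ F] [FiniteDimensional ℝ F]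
    {γ : E → ℝ → F} {g : E → F}
    (hγ : ContDiff ℝ ∞ ↿γ) (hper : ∀ x, Function.Periodic (γ x) 1)
    (hg : ContDiff ℝ ∞ g) (hsur : ∀ x, LoopSurrounds (γ x) (g x)) :
    ∃ φ : E → ℝ → ℝ,
      ContDiff ℝ ∞ ↿φ ∧
      (∀ x, φ x 0 = 0) ∧
      (∀ x s, φ x (s + 1) = φ x s + 1) ∧
      (∀ x s, 0 < deriv (φ x) s) ∧
      ∀ x, (∫ s in (0 : ℝ)..1, γ x (φ x s)) = g x := by
  have : CompleteSpace F := FiniteDimensional.complete ℝ F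
  set h : E × ℝ → F := fun p => γ p.1 p.2 - g p.1 with hh
  have hhs : ContDiff ℝ ∞ h := ContDiff.sub hγ (hg.comp contDiff_fst)
  have hhc : ∀ x, Continuous fun t => h (x, t) := fun x =>
    hhs.continuous.comp (by fun_prop)
  have hpos : ∀ x (l : F →L[ℝ] ℝ), l ≠ 0 → ∃ t ∈ Icc (0:ℝ) 1, 0 < l (h (x, t)) :=
    fun x l hl => (hsur x).exists_pos (hper x) l hl
  choose l hl using fun x => exists_crit (hhc x) (hpos x)
  -- smoothness of the critical point
  have hker : ContDiff ℝ ∞ (fun q : (E × (F →L[ℝ] ℝ)) × ℝ =>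
      Real.exp (q.1.2 (h (q.1.1, q.2))) • h (q.1.1, q.2)) := by
    have h1 : ContDiff ℝ ∞ (fun q : (E × (F →L[ℝ] ℝ)) × ℝ => h (q.1.1, q.2)) := by fun_prop
    have h2 : ContDiff ℝ ∞ (fun q : (E × (F →L[ℝ] ℝ)) × ℝ => q.1.2) := by fun_prop
    exact (h2.clm_apply h1).exp.smul h1
  have hls : ContDiff ℝ ∞ l := by
    refine contDiff_implicit (X := E) (Y := F →L[ℝ] ℝ) (Z := F) ?_
      (contDiff_param hker) hl ?_ ?_
    · rw [← LinearMap.toContinuousLinearMap.finrank_eq]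
      exact Subspace.dual_finrank_eq
    · intro x l' hl'
      exact crit_unique (hhc x) (hpos x) hl' (hl x)
    · intro x m hm
      rw [fderiv_param_apply (hker.of_le (by exact_mod_cast le_top))] at hm
      refine crit_nondegenerate (l := l x) (hhc x) (hpos x) ?_
      rw [← hm]
      congr 1; ext t
      have h1 := (hker.differentiable (by simp) ((x, l x), t)).hasFDerivAt
      have h0 : HasDerivAt (fun s : ℝ => l x + s • m) m 0 := by
        simpa using ((hasDerivAt_id (0:ℝ)).smul_const m).const_add (l x)
      have h2 := h1.comp_hasDerivAt_of_eq (0:ℝ)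
        (((hasDerivAt_const (0:ℝ) x).prodMk h0).prodMk (hasDerivAt_const (0:ℝ) t)) (by simp)
      have h3 : HasDerivAt (fun s : ℝ => Real.exp ((l x + s • m) (h (x, t))) • h (x, t))
          ((Real.exp (l x (h (x, t))) * m (h (x, t))) • h (x, t)) 0 := by
        have h4 : HasDerivAt (fun s : ℝ => (l x + s • m) (h (x, t))) (m (h (x, t))) 0 := by
          simpa using ((hasDerivAt_id (0:ℝ)).mul_const (m (h (x, t)))).const_add
            (l x (h (x, t)))
        simpa using h4.exp.smul_const (h (x, t))
      exact h3.unique h2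
  -- the density
  set e : E × ℝ → ℝ := fun p => Real.exp (l p.1 (h p)) with he
  have hes : ContDiff ℝ ∞ e := ((hls.comp contDiff_fst).clm_apply hhs).exp
  have hec : ∀ x, Continuous fun t => e (x, t) := fun x => hes.continuous.comp (by fun_prop)
  set Z : E → ℝ := fun x => ∫ t in (0:ℝ)..1, e (x, t) with hZ
  have hZs : ContDiff ℝ ∞ Z := contDiff_param hes
  have hZpos : ∀ x, 0 < Z x := fun x =>
    intervalIntegral.intervalIntegral_pos_of_pos ((hec x).intervalIntegrable _ _)
      (fun t => Real.exp_pos _) zero_lt_one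
  obtain ⟨φ, h1, h2, h3, h4, h5⟩ := exists_diffeo_of_density (γ := γ) hγ.continuous
    (ρ := fun p => (Z p.1)⁻¹ * e p)
    (((hZs.comp contDiff_fst).inv fun p => (hZpos p.1).ne').mul hes)
    (fun p => mul_pos (inv_pos.2 (hZpos _)) (Real.exp_pos _))
    (fun x t => by simp only [he, hh, hper x t])
    (fun x => by
      simp only [intervalIntegral.integral_const_mul]
      exact inv_mul_cancel₀ (hZpos x).ne')
  refine ⟨φ, h1, h2, h3, h4, fun x => ?_⟩
  rw [h5 x]
  have hsplit : ∀ t, ((Z x)⁻¹ * e (x, t)) • γ x t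
      = (Z x)⁻¹ • (e (x, t) • h (x, t)) + ((Z x)⁻¹ * e (x, t)) • g x := by
    intro t
    rw [smul_smul, ← smul_add]
    simp [hh]
  simp_rw [hsplit]
  rw [intervalIntegral.integral_add, intervalIntegral.integral_smul,
    intervalIntegral.integral_smul_const, intervalIntegral.integral_const_mul]
  · have h6 : ∫ t in (0:ℝ)..1, e (x, t) • h (x, t) = 0 := hl x
    have h7 : (Z x)⁻¹ * ∫ t in (0:ℝ)..1, e (x, t) = 1 := inv_mul_cancel₀ (hZpos x).ne'
    rw [h6, h7]; simp
  · exact (((hec x).smul (hhc x)).const_smul _).intervalIntegrable _ _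
  · exact ((continuous_const.mul (hec x)).smul continuous_const).intervalIntegrable _ _
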